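/- Fix β > 0, d ≥ 1, s ≥ 0 and ℓ ≥ 0, and suppose f ∈ A(s, ℓ, ℓ). Then for all R > 0 and all p ≥ p_M(s, ℓ) there exists a constant L̃ = L̃(R, p) > 0 such that for all probability measures μ ∈ P_{p,R}(ℝ^d) and ν ∈ P_p(ℝ^d), |M_β(μ) − M_β(ν)| ≤ L̃ · W_p(μ, ν). -/

import Mathlib

open MeasureTheory ENNReal
open scoped NNReal

noncomputable section

/-- Euclidean space `ℝ^d`. -/
abbrev Rd (d : ℕ) := EuclideanSpace ℝ (Fin d)

/-- The weight function `x ↦ exp (-β f x)`. -/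
def wFn (β : ℝ) {d : ℕ} (f : Rd d → ℝ) (x : Rd d) : ℝ := Real.exp (-β * f x)

/-- The weighted mean `M_β(μ) = (∫ x e^{-β f x} dμ) / (∫ e^{-β f x} dμ)`. -/
def wMean (β : ℝ) {d : ℕ} (f : Rd d → ℝ) (μ : Measure (Rd d)) : Rd d :=
  (∫ x, wFn β f x ∂μ)⁻¹ • ∫ x, wFn β f x • x ∂μ

/-- The weighted covariance `C_β(μ)`, a `d × d` matrix. -/
def wCov (β : ℝ) {d : ℕ} (f : Rd d → ℝ) (μ : Measure (Rd d)) :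
    Matrix (Fin d) (Fin d) ℝ := fun i j =>
  (∫ x, wFn β f x ∂μ)⁻¹ *
    ∫ x, wFn β f x * ((x i - wMean β f μ i) * (x j - wMean β f μ j)) ∂μ

/-- Frobenius norm of a matrix. -/
def frobNorm {m n : ℕ} (A : Matrix (Fin m) (Fin n) ℝ) : ℝ :=
  Real.sqrt (∑ i, ∑ j, (A i j) ^ 2)

/-- `S` is the (unique) positive semidefinite square root of `A`. -/
def IsPSDSqrt {d : ℕ} (S A : Matrix (Fin d) (Fin d) ℝ) : Prop :=
  S.PosSemidef ∧ S * S = A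

/-- `μ ∈ P_{p,R}`: the `p`-th moment of `μ` is bounded, `(∫ |x|^p dμ)^{1/p} ≤ R`. -/
def MomLE (p R : ℝ) {d : ℕ} (μ : Measure (Rd d)) : Prop :=
  ∫⁻ x, (‖x‖₊ : ℝ≥0∞) ^ p ∂μ ≤ ENNReal.ofReal (R ^ p)

/-- `μ ∈ P_p`: the `p`-th moment of `μ` is finite. -/
def MomFin (p : ℝ) {d : ℕ} (μ : Measure (Rd d)) : Prop :=
  ∫⁻ x, (‖x‖₊ : ℝ≥0∞) ^ p ∂μ < ⊤

/-- The Wasserstein-`p` distance between two probability measures on `ℝ^d`: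
the infimum over couplings `π` of `μ` and `ν` of `(∬ |x - y|^p dπ)^{1/p}`. -/
def Wp (p : ℝ) {d : ℕ} (μ ν : Measure (Rd d)) : ℝ :=
  (sInf {c : ℝ≥0∞ | ∃ π : Measure (Rd d × Rd d),
      π.map Prod.fst = μ ∧ π.map Prod.snd = ν ∧
      c = (∫⁻ z, (‖z.1 - z.2‖₊ : ℝ≥0∞) ^ p ∂π) ^ (1 / p)}).toReal

/-- `f_* = inf f`. -/
def fStar {d : ℕ} (f : Rd d → ℝ) : ℝ := sInf (Set.range f)

/-- The class `A(s, ℓ, u)` of objective functions: `f` is bounded from below,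
locally Lipschitz with growth exponent `s`, and `f - inf f` grows at least like
`|x|^ℓ` and at most like `|x|^u`. -/
structure ClassA {d : ℕ} (s ℓ u : ℝ) (f : Rd d → ℝ) : Prop where
  bddBelow : BddBelow (Set.range f)
  lip : ∃ Lf > 0, ∀ x y : Rd d, |f x - f y| ≤ Lf * (1 + ‖x‖ + ‖y‖) ^ s * ‖x - y‖
  growth_lower : ∃ cl > 0, ∃ Cl > 0, ∀ x : Rd d, cl * ‖x‖ ^ ℓ - Cl ≤ f x - fStar f
  growth_upper : ∃ cu > 0, ∃ Cu > 0, ∀ x : Rd d, f x - fStar f ≤ cu * ‖x‖ ^ u + Cu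

/-- `p_M(s, ℓ) = s + 2` if `ℓ = 0`, and `1` if `ℓ > 0`. -/
def pM (s ℓ : ℝ) : ℝ := if ℓ = 0 then s + 2 else 1

/-- `p_C(s, ℓ) = s + 3` if `ℓ = 0`, and `1` if `ℓ > 0`. -/
def pC (s ℓ : ℝ) : ℝ := if ℓ = 0 then s + 3 else 1

/-!
Let `w = exp (-β f)` and let `M` denote the `w`-weighted mean. As `f` is pinched between two
multiples of `‖x‖ ^ ℓ`, up to constants, `w x ≤ A * w y` as soon as `K * ‖y‖ ≤ ‖x‖`. Weighting
therefore cannot move much mass outwards, and `‖M ν‖` is bounded by a multiple of the first moment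
of `ν`, uniformly over all probability measures `ν`.

For a coupling `π` of `μ` and `ν`, centring at `m = M ν` kills the contribution of `ν` and gives
`(∫ w dμ) (M μ - M ν) = ∫ (w(x) (x - m) - w(y) (y - m)) π(dx dy)`. The integrand is at most a
multiple of `(1 + ‖m‖) (1 + ‖x‖ + ‖y‖) ^ (p - 1) ‖x - y‖`, so that Hölder's inequality produces the
transport cost. The remaining factors involve moments of `ν`, on which there is no uniform bound.
However, when the cost is at least `1` the bound on the two means suffices, and when it is at most
`1` Minkowski's inequality bounds the moments of `ν` by those of `μ`.
-/

section Real

lemma abs_exp_sub_exp_le (a b : ℝ) :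
    |Real.exp a - Real.exp b| ≤ |a - b| * max (Real.exp a) (Real.exp b) := by
  wlog hab : b ≤ a generalizing a b
  · rw [abs_sub_comm, abs_sub_comm a, max_comm]
    exact this b a (le_of_not_ge hab)
  have hexp : Real.exp b ≤ Real.exp a := Real.exp_le_exp.2 hab
  rw [abs_of_nonneg (sub_nonneg.2 hexp), abs_of_nonneg (sub_nonneg.2 hab), max_eq_left hexp]
  calc Real.exp a - Real.exp b = (1 - Real.exp (b - a)) * Real.exp a := by
        rw [sub_mul, ← Real.exp_add]; simp
    _ ≤ (a - b) * Real.exp a :=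
        mul_le_mul_of_nonneg_right (by linarith [Real.add_one_le_exp (b - a)]) (by positivity)

lemma abs_exp_neg_mul_sub_le {β : ℝ} (hβ : 0 ≤ β) (a b : ℝ) :
    |Real.exp (-β * a) - Real.exp (-β * b)| ≤
      β * |a - b| * max (Real.exp (-β * a)) (Real.exp (-β * b)) := by
  refine (abs_exp_sub_exp_le _ _).trans_eq ?_
  rw [← mul_sub, abs_mul, abs_neg, abs_of_nonneg hβ]

lemma exists_one_add_rpow_le_mul_exp {b ℓ q : ℝ} (hb : 0 < b) (hℓ : 0 < ℓ) (hq : 0 ≤ q) :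
    ∃ S : ℝ≥0, ∀ t : ℝ, 0 ≤ t → (1 + t) ^ q ≤ S * Real.exp (b * t ^ ℓ) := by
  refine ⟨.mk (2 ^ q * (q / ℓ / b) ^ (q / ℓ) * Real.exp b) (by positivity), fun t ht => ?_⟩
  set u : ℝ := 1 + t ^ ℓ with hu
  have hu1 : 1 ≤ u := le_add_of_nonneg_right (by positivity)
  have ht_le : t ≤ u ^ ℓ⁻¹ := by
    calc t = (t ^ ℓ) ^ ℓ⁻¹ := (Real.rpow_rpow_inv ht hℓ.ne').symm
      _ ≤ u ^ ℓ⁻¹ := by gcongr; linarith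
  have hu_root : 1 ≤ u ^ ℓ⁻¹ := Real.one_le_rpow hu1 (by positivity)
  calc (1 + t) ^ q ≤ (2 * u ^ ℓ⁻¹) ^ q := by gcongr; linarith
    _ = 2 ^ q * |u| ^ (q / ℓ) := by
        rw [abs_of_nonneg (by positivity), Real.mul_rpow (by norm_num) (by positivity),
          ← Real.rpow_mul (by positivity), inv_mul_eq_div]
    _ ≤ 2 ^ q * ((q / ℓ / |b|) ^ (q / ℓ) * Real.exp (|b| * |u|)) := by
        gcongr
        exact ProbabilityTheory.rpow_abs_le_mul_exp_abs u (by positivity) hb.ne'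
    _ = 2 ^ q * (q / ℓ / b) ^ (q / ℓ) * Real.exp b * Real.exp (b * t ^ ℓ) := by
        rw [abs_of_pos hb, abs_of_nonneg (by positivity), hu, mul_add, mul_one, Real.exp_add]
        ring

end Real

section Integral

variable {α F G : Type*} [MeasurableSpace α] [NormedAddCommGroup F] [NormedAddCommGroup G]
  {μ : Measure α} {p : ℝ}

lemma lintegral_mul_le_of_le_cross [IsProbabilityMeasure μ] {u v : α → ℝ≥0∞} {a b : ℝ≥0∞}
    (hu : Measurable u) (hv : Measurable v)
    (h : ∀ x y, u x * v x ≤ a * (u x * v y) + b * (u y * v x)) :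
    ∫⁻ x, u x * v x ∂μ ≤ (a + b) * ((∫⁻ x, u x ∂μ) * ∫⁻ x, v x ∂μ) := by
  have hpointwise (x : α) :
      u x * v x ≤ a * (u x * ∫⁻ y, v y ∂μ) + b * ((∫⁻ y, u y ∂μ) * v x) := by
    calc u x * v x = ∫⁻ _, u x * v x ∂μ := by simp
      _ ≤ ∫⁻ y, a * (u x * v y) + b * (u y * v x) ∂μ := lintegral_mono (h x)
      _ = _ := by
        rw [lintegral_add_left (by fun_prop), lintegral_const_mul _ (by fun_prop),
          lintegral_const_mul _ hv, lintegral_const_mul _ (by fun_prop), lintegral_mul_const _ hu]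
  calc ∫⁻ x, u x * v x ∂μ
      ≤ ∫⁻ x, a * (u x * ∫⁻ y, v y ∂μ) + b * ((∫⁻ y, u y ∂μ) * v x) ∂μ :=
        lintegral_mono hpointwise
    _ = (a + b) * ((∫⁻ x, u x ∂μ) * ∫⁻ x, v x ∂μ) := by
        rw [lintegral_add_left (by fun_prop), lintegral_const_mul _ (by fun_prop),
          lintegral_mul_const _ hu, lintegral_const_mul _ (by fun_prop),
          lintegral_const_mul _ hv, add_mul]

lemma lintegral_rpow_sub_one_mul_le (hp : 1 ≤ p) {f : α → F} {g : α → G}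
    (hf : AEStronglyMeasurable f μ) (hg : AEStronglyMeasurable g μ) :
    ∫⁻ x, ‖f x‖ₑ ^ (p - 1) * ‖g x‖ₑ ∂μ ≤ eLpNorm' f p μ ^ (p - 1) * eLpNorm' g p μ := by
  have hp0 : 0 < p := by linarith
  calc ∫⁻ x, ‖f x‖ₑ ^ (p - 1) * ‖g x‖ₑ ∂μ
      = ∫⁻ x, (‖f x‖ₑ ^ p) ^ ((p - 1) / p) * (‖g x‖ₑ ^ p) ^ (1 / p) ∂μ := by
        simp only [← ENNReal.rpow_mul, mul_div_cancel₀ _ hp0.ne', ENNReal.rpow_one]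
    _ ≤ (∫⁻ x, ‖f x‖ₑ ^ p ∂μ) ^ ((p - 1) / p) * (∫⁻ x, ‖g x‖ₑ ^ p ∂μ) ^ (1 / p) :=
        ENNReal.lintegral_mul_norm_pow_le (hf.enorm.pow_const p) (hg.enorm.pow_const p)
          (div_nonneg (sub_nonneg.2 hp) hp0.le) (by positivity) (by field_simp; ring)
    _ = eLpNorm' f p μ ^ (p - 1) * eLpNorm' g p μ := by
        rw [eLpNorm', eLpNorm', ← ENNReal.rpow_mul, one_div_mul_eq_div]

lemma eLpNorm'_map {β : Type*} [MeasurableSpace β] {φ : α → β} {f : β → F}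
    (hφ : Measurable φ) (hf : StronglyMeasurable f) :
    eLpNorm' f p (μ.map φ) = eLpNorm' (f ∘ φ) p μ := by
  simp only [eLpNorm', lintegral_map (hf.enorm.pow_const p) hφ, Function.comp_apply]

lemma lintegral_enorm_map_le_eLpNorm' [IsProbabilityMeasure μ] [MeasurableSpace F]
    [BorelSpace F] [SecondCountableTopology F] (hp : 1 ≤ p) {φ : α → F} (hφ : Measurable φ) :
    ∫⁻ x, ‖x‖ₑ ∂μ.map φ ≤ eLpNorm' φ p μ := by
  rw [lintegral_map measurable_enorm hφ]
  simpa [eLpNorm'] using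
    eLpNorm'_le_eLpNorm'_of_exponent_le zero_lt_one hp μ hφ.aestronglyMeasurable

end Integral

section Lipschitz

variable {E : Type*} [NormedAddCommGroup E]

lemma continuous_of_abs_sub_le_rpow_mul {f : E → ℝ} {D s : ℝ}
    (h : ∀ x y, |f x - f y| ≤ D * ((1 + ‖x‖ + ‖y‖) ^ s * ‖x - y‖)) : Continuous f := by
  refine continuous_iff_continuousAt.2 fun x => tendsto_iff_norm_sub_tendsto_zero.2 ?_
  have hbound : Continuous fun y => D * ((1 + ‖y‖ + ‖x‖) ^ s * ‖y - x‖) := by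
    have : Continuous fun y : E => (1 + ‖y‖ + ‖x‖) ^ s :=
      Continuous.rpow_const (by fun_prop) fun y => Or.inl (by positivity)
    fun_prop
  refine squeeze_zero (fun _ => norm_nonneg _) (fun y => h y x) ?_
  simpa using hbound.tendsto x

lemma mul_one_add_norm_add_norm_rpow_le {x y : E} {a S q : ℝ} (ha : 0 ≤ a) (hq : 0 ≤ q)
    (h : a * (1 + ‖x‖) ^ q ≤ S) (hxy : ‖x - y‖ ≤ 1) :
    a * (1 + ‖x‖ + ‖y‖) ^ q ≤ 2 ^ q * S := by
  calc a * (1 + ‖x‖ + ‖y‖) ^ q ≤ a * (2 * (1 + ‖x‖)) ^ q := by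
        gcongr
        linarith [norm_nonneg x, norm_le_norm_add_norm_sub x y]
    _ = 2 ^ q * (a * (1 + ‖x‖) ^ q) := by
        rw [Real.mul_rpow (by norm_num) (by positivity)]; ring
    _ ≤ 2 ^ q * S := by gcongr

/- Nearby points have comparable norms, so that the decay of `w` absorbs the growth of the Lipschitz
bound; for distant points the decay alone suffices. -/
lemma exists_abs_sub_le_rpow_neg_one_mul {w : E → ℝ} {K S s : ℝ≥0}
    (hw : ∀ x, 0 ≤ w x) (hdecay : ∀ x, w x * (1 + ‖x‖) ^ (s + 1 : ℝ) ≤ S)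
    (hlip : ∀ x y, |w x - w y| ≤ K * ((1 + ‖x‖ + ‖y‖) ^ (s : ℝ) * ‖x - y‖) * max (w x) (w y)) :
    ∃ D : ℝ≥0, ∀ x y, |w x - w y| ≤ D * ((1 + ‖x‖ + ‖y‖) ^ (-1 : ℝ) * ‖x - y‖) := by
  refine ⟨K * (2 ^ (s + 1 : ℝ) * S) + 2 * S, fun x y => ?_⟩
  wlog hxy : w y ≤ w x generalizing x y
  · rw [abs_sub_comm, norm_sub_rev, add_right_comm]
    exact this y x (le_of_not_ge hxy)
  set N : ℝ := 1 + ‖x‖ + ‖y‖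
  have hN0 : 0 < N := by positivity
  have hdiff : |w x - w y| ≤ w x := by
    rw [abs_of_nonneg (sub_nonneg.2 hxy)]; linarith [hw y]
  suffices |w x - w y| * N ≤ (K * (2 ^ (s + 1 : ℝ) * S) + 2 * S) * ‖x - y‖ by
    push_cast
    rwa [Real.rpow_neg_one, ← mul_assoc, mul_right_comm, ← div_eq_mul_inv, le_div_iff₀ hN0]
  rcases le_total ‖x - y‖ 1 with hnear | hfar
  · have hweight : w x * N ^ (s + 1 : ℝ) ≤ 2 ^ (s + 1 : ℝ) * S :=
      mul_one_add_norm_add_norm_rpow_le (hw x) (by positivity) (hdecay x) hnear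
    calc |w x - w y| * N ≤ K * (N ^ (s : ℝ) * ‖x - y‖) * w x * N := by
          gcongr
          simpa only [max_eq_left hxy] using hlip x y
      _ = K * (w x * N ^ (s + 1 : ℝ)) * ‖x - y‖ := by rw [Real.rpow_add_one hN0.ne']; ring
      _ ≤ K * (2 ^ (s + 1 : ℝ) * S) * ‖x - y‖ := by gcongr
      _ ≤ _ := by gcongr; exact le_add_of_nonneg_right (by positivity)
  · have hweight : w x * (1 + ‖x‖) ≤ S := by
      refine le_trans ?_ (hdecay x)
      gcongr
      · exact hw x
      · exact Real.self_le_rpow_of_one_le (by linarith [norm_nonneg x]) (by simp)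
    calc |w x - w y| * N ≤ w x * (2 * (1 + ‖x‖) * ‖x - y‖) := by
          gcongr
          · exact hw x
          · nlinarith [norm_nonneg x, norm_le_norm_add_norm_sub x y]
      _ = 2 * (w x * (1 + ‖x‖)) * ‖x - y‖ := by ring
      _ ≤ 2 * S * ‖x - y‖ := by gcongr
      _ ≤ _ := by gcongr; exact le_add_of_nonneg_left (by positivity)

end Lipschitz

section WeightedMean

variable {E : Type*} [NormedAddCommGroup E] [NormedSpace ℝ E] [MeasurableSpace E]

/-- The mean `(∫ w dμ)⁻¹ ∫ w(x) x μ(dx)` of `μ` with respect to a weight `w` on a normed space; it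
is the zero vector when `∫ w dμ = 0`. -/
def weightedMean (w : E → ℝ) (μ : Measure E) : E :=
  (∫ x, w x ∂μ)⁻¹ • ∫ x, w x • x ∂μ

lemma integral_smul_weightedMean_sub [CompleteSpace E] {w : E → ℝ} {μ : Measure E}
    (hZ : ∫ x, w x ∂μ ≠ 0) (hwint : Integrable w μ)
    (hwx : Integrable (fun x => w x • x) μ) (m : E) :
    (∫ x, w x ∂μ) • (weightedMean w μ - m) = ∫ x, w x • (x - m) ∂μ := by
  simp only [weightedMean, smul_sub, smul_inv_smul₀ hZ]
  rw [integral_sub hwx (hwint.smul_const m), integral_smul_const]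

lemma integral_smul_weightedMean_sub_weightedMean [CompleteSpace E] [BorelSpace E]
    [SecondCountableTopology E] {w : E → ℝ} (hw : Continuous w)
    {π : Measure (E × E)} (hZfst : ∫ x, w x ∂π.fst ≠ 0) (hZsnd : ∫ x, w x ∂π.snd ≠ 0)
    (hwfst : Integrable w π.fst) (hwsnd : Integrable w π.snd)
    (hxfst : Integrable (fun x => w x • x) π.fst) (hxsnd : Integrable (fun x => w x • x) π.snd) :
    (∫ x, w x ∂π.fst) • (weightedMean w π.fst - weightedMean w π.snd) =
      ∫ z, (w z.1 • (z.1 - weightedMean w π.snd) - w z.2 • (z.2 - weightedMean w π.snd)) ∂π := by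
  set m := weightedMean w π.snd with hm
  have hcont : Continuous fun x => w x • (x - m) := by fun_prop
  have hint {ρ : Measure E} (hwρ : Integrable w ρ) (hxρ : Integrable (fun x => w x • x) ρ) :
      Integrable (fun x => w x • (x - m)) ρ := by
    simp only [smul_sub]
    exact hxρ.sub (hwρ.smul_const m)
  have hcentred : ∫ x, w x • (x - m) ∂π.snd = 0 := by
    rw [← integral_smul_weightedMean_sub hZsnd hwsnd hxsnd, ← hm, sub_self, smul_zero]
  calc (∫ x, w x ∂π.fst) • (weightedMean w π.fst - m)
      = ∫ x, w x • (x - m) ∂π.fst - ∫ x, w x • (x - m) ∂π.snd := by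
        rw [integral_smul_weightedMean_sub hZfst hwfst hxfst, hcentred, sub_zero]
    _ = ∫ z, w z.1 • (z.1 - m) ∂π - ∫ z, w z.2 • (z.2 - m) ∂π := by
        rw [Measure.fst, Measure.snd,
          integral_map measurable_fst.aemeasurable hcont.aestronglyMeasurable,
          integral_map measurable_snd.aemeasurable hcont.aestronglyMeasurable]
    _ = _ := (integral_sub ((hint hwfst hxfst).comp_measurable measurable_fst)
        ((hint hwsnd hxsnd).comp_measurable measurable_snd)).symm

end WeightedMean

section TemperedWeight

variable {E : Type*} [NormedAddCommGroup E]

/-- The class of weights with a `p`-Wasserstein-stable weighted mean: bounded away from zero on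
balls, decreasing in the norm up to a dilation and a constant factor, and Lipschitz with growth
exponent `p - 2` (which is negative for `p < 2`). -/
structure TemperedWeight (p : ℝ) (w : E → ℝ) : Prop where
  exists_pos_le : ∀ r : ℝ, ∃ c : ℝ≥0, 0 < c ∧ ∀ x, ‖x‖ ≤ r → c ≤ w x
  exists_le_mul : ∃ K A : ℝ≥0, ∀ x y, K * ‖y‖ ≤ ‖x‖ → w x ≤ A * w y
  exists_abs_sub_le : ∃ D : ℝ≥0, ∀ x y,
    |w x - w y| ≤ D * ((1 + ‖x‖ + ‖y‖) ^ (p - 2) * ‖x - y‖)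

namespace TemperedWeight

variable {p : ℝ} {w : E → ℝ}

lemma pos (hw : TemperedWeight p w) (x : E) : 0 < w x := by
  obtain ⟨c, hc, hle⟩ := hw.exists_pos_le ‖x‖
  exact (NNReal.coe_pos.2 hc).trans_le (hle x le_rfl)

lemma enorm_eq (hw : TemperedWeight p w) (x : E) : ‖w x‖ₑ = ENNReal.ofReal (w x) :=
  Real.enorm_of_nonneg (hw.pos x).le

lemma continuous (hw : TemperedWeight p w) : Continuous w :=
  have ⟨_, hD⟩ := hw.exists_abs_sub_le
  continuous_of_abs_sub_le_rpow_mul hD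

lemma exists_le (hw : TemperedWeight p w) : ∃ B : ℝ≥0, ∀ x, w x ≤ B := by
  obtain ⟨K, A, hKA⟩ := hw.exists_le_mul
  refine ⟨A * (w 0).toNNReal, fun x => ?_⟩
  rw [NNReal.coe_mul, Real.coe_toNNReal _ (hw.pos 0).le]
  exact hKA x 0 (by simp)

section Measurable

variable [MeasurableSpace E] [BorelSpace E]

lemma integrable (hw : TemperedWeight p w) (μ : Measure E) [IsFiniteMeasure μ] :
    Integrable w μ := by
  obtain ⟨B, hB⟩ := hw.exists_le
  refine Integrable.of_bound hw.continuous.aestronglyMeasurable B (.of_forall fun x => ?_)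
  rw [Real.norm_of_nonneg (hw.pos x).le]
  exact hB x

lemma lintegral_enorm (hw : TemperedWeight p w) (μ : Measure E) [IsFiniteMeasure μ] :
    ∫⁻ x, ‖w x‖ₑ ∂μ = ‖∫ x, w x ∂μ‖ₑ := by
  rw [Real.enorm_of_nonneg (integral_nonneg fun x => (hw.pos x).le),
    ofReal_integral_eq_lintegral_ofReal (hw.integrable μ) (.of_forall fun x => (hw.pos x).le)]
  simp only [hw.enorm_eq]

lemma integral_pos (hw : TemperedWeight p w) (μ : Measure E) [IsProbabilityMeasure μ] :
    0 < ∫ x, w x ∂μ := by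
  rw [integral_pos_iff_support_of_nonneg (fun x => (hw.pos x).le) (hw.integrable μ),
    Function.support_eq_univ fun x => (hw.pos x).ne', measure_univ]
  exact one_pos

/- Markov's inequality for `{‖x‖ > r}`, in the form `c ≤ w(x) + (c / r) ‖x‖` for all `x`. -/
lemma exists_le_enorm_integral (hw : TemperedWeight p w) (R : ℝ≥0) :
    ∃ κ : ℝ≥0, 0 < κ ∧ ∀ μ : Measure E, IsProbabilityMeasure μ → ∫⁻ x, ‖x‖ₑ ∂μ ≤ R →
      κ ≤ ‖∫ x, w x ∂μ‖ₑ := by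
  set r : ℝ≥0 := 2 * (R + 1) with hr
  have hr0 : 0 < r := by positivity
  obtain ⟨c, hc, hball⟩ := hw.exists_pos_le r
  refine ⟨c / 2, by positivity, fun μ _ hμ => ?_⟩
  have hpointwise (x : E) : (c : ℝ≥0∞) ≤ ‖w x‖ₑ + (c / r : ℝ≥0) * ‖x‖ₑ := by
    rcases le_total ‖x‖ r with hx | hx
    · refine le_add_right ?_
      rw [hw.enorm_eq]
      exact ENNReal.le_ofReal_iff_toReal_le ENNReal.coe_ne_top (hw.pos x).le |>.2 (hball x hx)
    · refine le_add_left ?_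
      rw [enorm_eq_nnnorm, ← ENNReal.coe_mul, ENNReal.coe_le_coe, div_mul_eq_mul_div,
        le_div_iff₀ hr0]
      gcongr
      exact hx
  have hintegrated : (c : ℝ≥0∞) ≤ ‖∫ x, w x ∂μ‖ₑ + (c / 2 : ℝ≥0) := by
    calc (c : ℝ≥0∞) = ∫⁻ _, c ∂μ := by simp
      _ ≤ ∫⁻ x, ‖w x‖ₑ + (c / r : ℝ≥0) * ‖x‖ₑ ∂μ := lintegral_mono hpointwise
      _ = ‖∫ x, w x ∂μ‖ₑ + (c / r : ℝ≥0) * ∫⁻ x, ‖x‖ₑ ∂μ := by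
          rw [lintegral_add_right _ (by fun_prop), lintegral_const_mul _ (by fun_prop),
            hw.lintegral_enorm]
      _ ≤ ‖∫ x, w x ∂μ‖ₑ + (c / r : ℝ≥0) * (R + 1 : ℝ≥0) := by
          gcongr
          exact hμ.trans (by exact_mod_cast le_self_add)
      _ = ‖∫ x, w x ∂μ‖ₑ + (c / 2 : ℝ≥0) := by
          rw [← ENNReal.coe_mul, hr]
          congr 2
          field_simp
  rw [← ENNReal.add_le_add_iff_right (ENNReal.coe_ne_top (r := c / 2)), ← ENNReal.coe_add,
    add_halves]
  exact hintegrated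

end Measurable

variable [NormedSpace ℝ E]

lemma exists_norm_smul_sub_smul_le (hp : 1 ≤ p) (hw : TemperedWeight p w) :
    ∃ G : ℝ≥0, ∀ m x y, ‖w x • (x - m) - w y • (y - m)‖ ≤
      (1 + ‖m‖) * (G * ((1 + ‖x‖ + ‖y‖) ^ (p - 1) * ‖x - y‖)) := by
  obtain ⟨B, hB⟩ := hw.exists_le
  obtain ⟨D, hD⟩ := hw.exists_abs_sub_le
  refine ⟨B + D, fun m x y => ?_⟩
  set N : ℝ := 1 + ‖x‖ + ‖y‖
  have hN1 : 1 ≤ N := by linarith [norm_nonneg x, norm_nonneg y]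
  have hNp : 1 ≤ N ^ (p - 1) := Real.one_le_rpow hN1 (by linarith)
  have hNpow : N ^ (p - 2) * N = N ^ (p - 1) := by
    rw [← Real.rpow_add_one (by positivity)]; congr 1; ring
  have hsub : ‖y - m‖ ≤ (1 + ‖m‖) * N := by
    nlinarith [norm_sub_le y m, norm_nonneg x, norm_nonneg y, norm_nonneg m]
  calc ‖w x • (x - m) - w y • (y - m)‖
      = ‖w x • (x - y) + (w x - w y) • (y - m)‖ := by congr 1; module
    _ ≤ w x * ‖x - y‖ + |w x - w y| * ‖y - m‖ := by
        refine (norm_add_le _ _).trans_eq ?_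
        rw [norm_smul, norm_smul, Real.norm_of_nonneg (hw.pos x).le, Real.norm_eq_abs]
    _ ≤ B * ‖x - y‖ + D * (N ^ (p - 2) * ‖x - y‖) * ((1 + ‖m‖) * N) := by
        gcongr
        exacts [hB x, hD x y]
    _ = B * (1 * 1 * ‖x - y‖) + (1 + ‖m‖) * (D * (N ^ (p - 1) * ‖x - y‖)) := by
        rw [← hNpow]; ring
    _ ≤ B * ((1 + ‖m‖) * N ^ (p - 1) * ‖x - y‖) +
          (1 + ‖m‖) * (D * (N ^ (p - 1) * ‖x - y‖)) := by
        gcongr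
        exact le_add_of_nonneg_right (norm_nonneg m)
    _ = (1 + ‖m‖) * ((B + D) * (N ^ (p - 1) * ‖x - y‖)) := by ring

variable [MeasurableSpace E] [BorelSpace E]

lemma integrable_smul (hw : TemperedWeight p w) {μ : Measure E} (hμ : Integrable id μ) :
    Integrable (fun x => w x • x) μ := by
  obtain ⟨B, hB⟩ := hw.exists_le
  refine hμ.bdd_smul B hw.continuous.aestronglyMeasurable (.of_forall fun x => ?_)
  rw [Real.norm_of_nonneg (hw.pos x).le]
  exact hB x

/- If `‖x‖ < K ‖y‖` then `w(x) ‖x‖ ≤ K w(x) ‖y‖`, and otherwise `w(x) ‖x‖ ≤ A w(y) ‖x‖`; integrating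
the sum of the two bounds over independent `x` and `y` gives the claim with `C = K + A`. -/
lemma exists_enorm_weightedMean_le (hw : TemperedWeight p w) :
    ∃ C : ℝ≥0, ∀ μ : Measure E, IsProbabilityMeasure μ →
      ‖weightedMean w μ‖ₑ ≤ C * ∫⁻ x, ‖x‖ₑ ∂μ := by
  obtain ⟨K, A, hKA⟩ := hw.exists_le_mul
  refine ⟨K + A, fun μ _ => ?_⟩
  have hcross (x y : E) :
      ‖w x‖ₑ * ‖x‖ₑ ≤ K * (‖w x‖ₑ * ‖y‖ₑ) + A * (‖w y‖ₑ * ‖x‖ₑ) := by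
    rcases le_total ‖x‖ (K * ‖y‖) with hxy | hxy
    · refine le_add_right ?_
      rw [mul_left_comm]
      gcongr
      rw [enorm_eq_nnnorm, enorm_eq_nnnorm, ← ENNReal.coe_mul, ENNReal.coe_le_coe]
      exact hxy
    · refine le_add_left ?_
      rw [← mul_assoc]
      gcongr
      rw [hw.enorm_eq, hw.enorm_eq, ← ENNReal.ofReal_coe_nnreal, ← ENNReal.ofReal_mul A.coe_nonneg]
      exact ENNReal.ofReal_le_ofReal (hKA x y hxy)
  have hZ : ‖∫ x, w x ∂μ‖ₑ ≠ 0 := enorm_ne_zero.2 (hw.integral_pos μ).ne'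
  rw [weightedMean, enorm_smul, enorm_inv (hw.integral_pos μ).ne',
    ENNReal.inv_mul_le_iff hZ enorm_ne_top]
  calc ‖∫ x, w x • x ∂μ‖ₑ ≤ ∫⁻ x, ‖w x‖ₑ * ‖x‖ₑ ∂μ := by
        simpa only [enorm_smul] using enorm_integral_le_lintegral_enorm fun x => w x • x
    _ ≤ (K + A) * ((∫⁻ x, ‖w x‖ₑ ∂μ) * ∫⁻ x, ‖x‖ₑ ∂μ) :=
        lintegral_mul_le_of_le_cross hw.continuous.enorm.measurable measurable_enorm hcross
    _ = ‖∫ x, w x ∂μ‖ₑ * ((K + A : ℝ≥0) * ∫⁻ x, ‖x‖ₑ ∂μ) := by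
        rw [hw.lintegral_enorm, ENNReal.coe_add]; ring

end TemperedWeight
end TemperedWeight

section Wasserstein

variable {E : Type*} [NormedAddCommGroup E] [MeasurableSpace E] {p : ℝ}

/-- The extended Wasserstein distance of order `p` between two measures on a normed group, the
infimum of the `L^p` costs of their couplings; it is `∞` when no coupling has finite cost. -/
def wassersteinEDist (p : ℝ) (μ ν : Measure E) : ℝ≥0∞ :=
  sInf {c | ∃ π : Measure (E × E), π.fst = μ ∧ π.snd = ν ∧ c = eLpNorm' (fun z => z.1 - z.2) p π}

variable [BorelSpace E] [SecondCountableTopology E]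

lemma wassersteinEDist_ne_top {μ ν : Measure E} [IsProbabilityMeasure μ] [IsProbabilityMeasure ν]
    (hp : 1 ≤ p) (hμ : eLpNorm' id p μ ≠ ∞) (hν : eLpNorm' id p ν ≠ ∞) :
    wassersteinEDist p μ ν ≠ ∞ := by
  have hfst : eLpNorm' Prod.fst p (μ.prod ν) = eLpNorm' id p μ := by
    conv_rhs => rw [← Measure.fst_prod (μ := μ) (ν := ν), Measure.fst]
    exact (eLpNorm'_map measurable_fst stronglyMeasurable_id).symm
  have hsnd : eLpNorm' (-Prod.snd) p (μ.prod ν) = eLpNorm' id p ν := by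
    conv_rhs => rw [← Measure.snd_prod (μ := μ) (ν := ν), Measure.snd]
    rw [eLpNorm'_neg]
    exact (eLpNorm'_map measurable_snd stronglyMeasurable_id).symm
  refine ne_top_of_le_ne_top (ENNReal.add_ne_top.2 ⟨hμ, hν⟩) ?_
  calc wassersteinEDist p μ ν ≤ eLpNorm' (fun z => z.1 - z.2) p (μ.prod ν) :=
        sInf_le ⟨_, Measure.fst_prod, Measure.snd_prod, rfl⟩
    _ = eLpNorm' (Prod.fst + -Prod.snd) p (μ.prod ν) := by
        congr 1; ext z; exact sub_eq_add_neg _ _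
    _ ≤ eLpNorm' id p μ + eLpNorm' id p ν := by
        rw [← hfst, ← hsnd]
        exact eLpNorm'_add_le (by fun_prop) (by fun_prop) hp

lemma eLpNorm'_snd_le_add (hp : 1 ≤ p) (π : Measure (E × E)) :
    eLpNorm' Prod.snd p π ≤ eLpNorm' Prod.fst p π + eLpNorm' (fun z => z.1 - z.2) p π := by
  calc eLpNorm' Prod.snd p π = eLpNorm' (Prod.fst + fun z : E × E => z.2 - z.1) p π := by
        congr 1; ext z; simp
    _ ≤ eLpNorm' Prod.fst p π + eLpNorm' (fun z => z.2 - z.1) p π :=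
        eLpNorm'_add_le (by fun_prop) (by fun_prop) hp
    _ = eLpNorm' Prod.fst p π + eLpNorm' (fun z => z.1 - z.2) p π := by
        congr 1
        exact eLpNorm'_congr_norm_ae (.of_forall fun z => norm_sub_rev _ _)

lemma eLpNorm'_one_add_norm_add_norm_le (hp : 1 ≤ p) (π : Measure (E × E))
    [IsProbabilityMeasure π] :
    eLpNorm' (fun z => 1 + ‖z.1‖ + ‖z.2‖) p π ≤
      1 + eLpNorm' Prod.fst p π + eLpNorm' Prod.snd p π := by
  have hone : eLpNorm' (fun _ : E × E => (1 : ℝ)) p π = 1 := by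
    rw [eLpNorm'_const_of_isProbabilityMeasure _ (zero_lt_one.trans_le hp), enorm_one]
  calc eLpNorm' (fun z => 1 + ‖z.1‖ + ‖z.2‖) p π
      = eLpNorm' ((fun _ : E × E => (1 : ℝ)) + (fun z => ‖z.1‖) + fun z => ‖z.2‖) p π := rfl
    _ ≤ eLpNorm' (fun _ : E × E => (1 : ℝ)) p π + eLpNorm' (fun z => ‖z.1‖) p π +
          eLpNorm' (fun z => ‖z.2‖) p π := by
        grw [eLpNorm'_add_le (by fun_prop) (by fun_prop) hp,
          eLpNorm'_add_le (by fun_prop) (by fun_prop) hp]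
    _ = 1 + eLpNorm' Prod.fst p π + eLpNorm' Prod.snd p π := by
        rw [hone, eLpNorm'_norm, eLpNorm'_norm]

end Wasserstein

section Stability

variable {E : Type*} [NormedAddCommGroup E] [NormedSpace ℝ E] [CompleteSpace E]
  [MeasurableSpace E] [BorelSpace E] [SecondCountableTopology E] {p : ℝ} {w : E → ℝ}

namespace TemperedWeight

lemma exists_enorm_integral_mul_enorm_weightedMean_sub_le (hp : 1 ≤ p)
    (hw : TemperedWeight p w) :
    ∃ G : ℝ≥0, ∀ π : Measure (E × E), IsProbabilityMeasure π →
      Integrable id π.fst → Integrable id π.snd →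
      ‖∫ x, w x ∂π.fst‖ₑ * ‖weightedMean w π.fst - weightedMean w π.snd‖ₑ ≤
        (1 + ‖weightedMean w π.snd‖ₑ) * (G *
          (eLpNorm' (fun z => 1 + ‖z.1‖ + ‖z.2‖) p π ^ (p - 1) *
            eLpNorm' (fun z => z.1 - z.2) p π)) := by
  obtain ⟨G, hG⟩ := hw.exists_norm_smul_sub_smul_le hp
  refine ⟨G, fun π _ hfst hsnd => ?_⟩
  set m := weightedMean w π.snd
  have hpointwise (z : E × E) : ‖w z.1 • (z.1 - m) - w z.2 • (z.2 - m)‖ₑ ≤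
      (1 + ‖m‖ₑ) * (G * (‖1 + ‖z.1‖ + ‖z.2‖‖ₑ ^ (p - 1) * ‖z.1 - z.2‖ₑ)) := by
    have hN : 0 ≤ 1 + ‖z.1‖ + ‖z.2‖ := by positivity
    rw [Real.enorm_of_nonneg hN, ENNReal.ofReal_rpow_of_nonneg hN (sub_nonneg.2 hp),
      ← ENNReal.ofReal_one, ← ofReal_norm, ← ofReal_norm, ← ofReal_norm,
      ← ENNReal.ofReal_coe_nnreal, ← ENNReal.ofReal_add zero_le_one (norm_nonneg m),
      ← ENNReal.ofReal_mul (by positivity), ← ENNReal.ofReal_mul G.coe_nonneg,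
      ← ENNReal.ofReal_mul (by positivity)]
    exact ENNReal.ofReal_le_ofReal (hG m z.1 z.2)
  calc ‖∫ x, w x ∂π.fst‖ₑ * ‖weightedMean w π.fst - m‖ₑ
      = ‖∫ z, (w z.1 • (z.1 - m) - w z.2 • (z.2 - m)) ∂π‖ₑ := by
        rw [← enorm_smul, integral_smul_weightedMean_sub_weightedMean hw.continuous
          (hw.integral_pos _).ne' (hw.integral_pos _).ne' (hw.integrable _) (hw.integrable _)
          (hw.integrable_smul hfst) (hw.integrable_smul hsnd)]
    _ ≤ ∫⁻ z, (1 + ‖m‖ₑ) * (G * (‖1 + ‖z.1‖ + ‖z.2‖‖ₑ ^ (p - 1) * ‖z.1 - z.2‖ₑ)) ∂π :=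
        (enorm_integral_le_lintegral_enorm _).trans (lintegral_mono hpointwise)
    _ = (1 + ‖m‖ₑ) *
          (G * ∫⁻ z, ‖1 + ‖z.1‖ + ‖z.2‖‖ₑ ^ (p - 1) * ‖z.1 - z.2‖ₑ ∂π) := by
        rw [lintegral_const_mul _ (by fun_prop), lintegral_const_mul _ (by fun_prop)]
    _ ≤ _ := by
        gcongr
        exact lintegral_rpow_sub_one_mul_le hp (by fun_prop) (by fun_prop)

lemma exists_enorm_weightedMean_fst_sub_snd_le_of_le_one (hp : 1 ≤ p) (hw : TemperedWeight p w)
    (R : ℝ≥0) :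
    ∃ L : ℝ≥0, ∀ π : Measure (E × E), IsProbabilityMeasure π → eLpNorm' Prod.fst p π ≤ R →
      eLpNorm' (fun z => z.1 - z.2) p π ≤ 1 →
      ‖weightedMean w π.fst - weightedMean w π.snd‖ₑ ≤ L * eLpNorm' (fun z => z.1 - z.2) p π := by
  obtain ⟨C, hC⟩ := hw.exists_enorm_weightedMean_le
  obtain ⟨κ, hκ, hZ⟩ := hw.exists_le_enorm_integral R
  obtain ⟨G, hG⟩ := hw.exists_enorm_integral_mul_enorm_weightedMean_sub_le hp
  refine ⟨κ⁻¹ * ((1 + C * (R + 1)) * (G * (2 * R + 2) ^ (p - 1))), fun π _ hR hcost => ?_⟩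
  have hsnd_norm : eLpNorm' Prod.snd p π ≤ (R + 1 : ℝ≥0) := by
    grw [eLpNorm'_snd_le_add hp π, hR, hcost, ENNReal.coe_add, ENNReal.coe_one]
  have hN : eLpNorm' (fun z => 1 + ‖z.1‖ + ‖z.2‖) p π ≤ (2 * R + 2 : ℝ≥0) := by
    grw [eLpNorm'_one_add_norm_add_norm_le hp π, hsnd_norm, hR]
    exact le_of_eq (by push_cast; ring)
  have hfst : ∫⁻ x, ‖x‖ₑ ∂π.fst ≤ R :=
    (lintegral_enorm_map_le_eLpNorm' hp measurable_fst).trans hR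
  have hsnd : ∫⁻ x, ‖x‖ₑ ∂π.snd ≤ (R + 1 : ℝ≥0) :=
    (lintegral_enorm_map_le_eLpNorm' hp measurable_snd).trans hsnd_norm
  have hmean : ‖weightedMean w π.snd‖ₑ ≤ C * (R + 1 : ℝ≥0) :=
    (hC _ inferInstance).trans (by gcongr)
  rw [ENNReal.coe_mul, ENNReal.coe_inv hκ.ne', mul_assoc,
    ← ENNReal.mul_le_iff_le_inv (ENNReal.coe_ne_zero.2 hκ.ne') ENNReal.coe_ne_top]
  calc κ * ‖weightedMean w π.fst - weightedMean w π.snd‖ₑ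
      ≤ ‖∫ x, w x ∂π.fst‖ₑ * ‖weightedMean w π.fst - weightedMean w π.snd‖ₑ := by
        gcongr; exact hZ _ inferInstance hfst
    _ ≤ (1 + ‖weightedMean w π.snd‖ₑ) * (G *
          (eLpNorm' (fun z => 1 + ‖z.1‖ + ‖z.2‖) p π ^ (p - 1) *
            eLpNorm' (fun z => z.1 - z.2) p π)) :=
        hG π inferInstance ⟨aestronglyMeasurable_id, hfst.trans_lt coe_lt_top⟩
          ⟨aestronglyMeasurable_id, hsnd.trans_lt coe_lt_top⟩
    _ ≤ (1 + C * (R + 1 : ℝ≥0)) * (G * (((2 * R + 2 : ℝ≥0) : ℝ≥0∞) ^ (p - 1) *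
          eLpNorm' (fun z => z.1 - z.2) p π)) := by
        have : 0 ≤ p - 1 := sub_nonneg.2 hp
        gcongr
    _ = _ := by
        rw [← ENNReal.coe_rpow_of_nonneg _ (sub_nonneg.2 hp)]
        push_cast
        ring

lemma exists_enorm_weightedMean_fst_sub_snd_le (hp : 1 ≤ p) (hw : TemperedWeight p w) (R : ℝ≥0) :
    ∃ L : ℝ≥0, 0 < L ∧ ∀ π : Measure (E × E), IsProbabilityMeasure π →
      eLpNorm' Prod.fst p π ≤ R →
      ‖weightedMean w π.fst - weightedMean w π.snd‖ₑ ≤ L * eLpNorm' (fun z => z.1 - z.2) p π := by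
  obtain ⟨C, hC⟩ := hw.exists_enorm_weightedMean_le
  obtain ⟨L, hL⟩ := hw.exists_enorm_weightedMean_fst_sub_snd_le_of_le_one hp R
  refine ⟨L + C * (2 * R + 1) + 1, by positivity, fun π _ hR => ?_⟩
  set c := eLpNorm' (fun z => z.1 - z.2) p π
  rcases le_total c 1 with hnear | hfar
  · grw [hL π inferInstance hR hnear, add_assoc, ← le_self_add (a := L)]
  have hfst : ‖weightedMean w π.fst‖ₑ ≤ C * R := by
    grw [hC _ inferInstance, ← hR]
    gcongr
    exact lintegral_enorm_map_le_eLpNorm' hp measurable_fst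
  have hsnd : ‖weightedMean w π.snd‖ₑ ≤ C * (R + c) := by
    grw [hC _ inferInstance, ← hR, ← eLpNorm'_snd_le_add hp π]
    gcongr
    exact lintegral_enorm_map_le_eLpNorm' hp measurable_snd
  calc ‖weightedMean w π.fst - weightedMean w π.snd‖ₑ ≤ C * R + C * (R + c) :=
        enorm_sub_le.trans (add_le_add hfst hsnd)
    _ ≤ C * (R * c) + C * (R * c + c) := by gcongr <;> exact le_mul_of_one_le_right' hfar
    _ = (C * (2 * R + 1) : ℝ≥0) * c := by push_cast; ring
    _ ≤ (L + C * (2 * R + 1) + 1 : ℝ≥0) * c := by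
        gcongr
        exact le_self_add.trans' le_add_self

theorem exists_enorm_weightedMean_sub_le (hp : 1 ≤ p) (hw : TemperedWeight p w) (R : ℝ≥0) :
    ∃ L : ℝ≥0, 0 < L ∧ ∀ μ ν : Measure E, IsProbabilityMeasure μ → IsProbabilityMeasure ν →
      eLpNorm' id p μ ≤ R →
      ‖weightedMean w μ - weightedMean w ν‖ₑ ≤ L * wassersteinEDist p μ ν := by
  obtain ⟨L, hL, hcoupling⟩ := hw.exists_enorm_weightedMean_fst_sub_snd_le hp R
  refine ⟨L, hL, fun μ ν _ _ hμ => ?_⟩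
  rw [mul_comm, ← ENNReal.div_le_iff (ENNReal.coe_ne_zero.2 hL.ne') ENNReal.coe_ne_top]
  refine le_sInf ?_
  rintro _ ⟨π, rfl, rfl, rfl⟩
  rw [ENNReal.div_le_iff (ENNReal.coe_ne_zero.2 hL.ne') ENNReal.coe_ne_top, mul_comm]
  have hπ : IsProbabilityMeasure π := ⟨by rw [← Measure.fst_univ, measure_univ]⟩
  rw [Measure.fst, eLpNorm'_map measurable_fst stronglyMeasurable_id] at hμ
  exact hcoupling π hπ hμ

end TemperedWeight

end Stability

section PowerGrowth

variable {E : Type*} [NormedAddCommGroup E] {s ℓ β p : ℝ} {f : E → ℝ}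

/-- The class `A(s, ℓ, ℓ)` on a normed group: locally Lipschitz functions with growth exponent `s`
that lie between two affine functions of `‖x‖ ^ ℓ`. The infimum of `f` is absorbed into the
additive constants. -/
structure PowerGrowth (s ℓ : ℝ) (f : E → ℝ) : Prop where
  exists_abs_sub_le : ∃ K : ℝ≥0, ∀ x y, |f x - f y| ≤ K * ((1 + ‖x‖ + ‖y‖) ^ s * ‖x - y‖)
  exists_mul_sub_le : ∃ a > 0, ∃ C, ∀ x, a * ‖x‖ ^ ℓ - C ≤ f x
  exists_le_mul_add : ∃ b > 0, ∃ C, ∀ x, f x ≤ b * ‖x‖ ^ ℓ + C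

lemma one_le_pM (hs : 0 ≤ s) (ℓ : ℝ) : 1 ≤ pM s ℓ := by
  unfold pM
  split_ifs <;> linarith

namespace PowerGrowth

lemma bddBelow (hf : PowerGrowth s ℓ f) : BddBelow (Set.range f) := by
  obtain ⟨a, ha, C, hC⟩ := hf.exists_mul_sub_le
  refine ⟨-C, Set.forall_mem_range.2 fun x => ?_⟩
  linarith [hC x, show 0 ≤ a * ‖x‖ ^ ℓ by positivity]

lemma exists_le_add (hℓ : 0 ≤ ℓ) (hf : PowerGrowth s ℓ f) :
    ∃ (K : ℝ≥0) (Δ : ℝ), ∀ x y, K * ‖y‖ ≤ ‖x‖ → f y ≤ f x + Δ := by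
  obtain ⟨b, hb, C', hC'⟩ := hf.exists_le_mul_add
  rcases hℓ.eq_or_lt with rfl | hℓ
  · obtain ⟨m, hm⟩ := hf.bddBelow
    refine ⟨0, b + C' - m, fun x y _ => ?_⟩
    have hfy : f y ≤ b + C' := by simpa using hC' y
    linarith [hm ⟨x, rfl⟩]
  · obtain ⟨a, ha, C, hC⟩ := hf.exists_mul_sub_le
    refine ⟨.mk ((b / a) ^ ℓ⁻¹) (by positivity), C + C', fun x y hxy => ?_⟩
    have hpow : b * ‖y‖ ^ ℓ ≤ a * ‖x‖ ^ ℓ := by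
      calc b * ‖y‖ ^ ℓ = a * ((b / a) ^ ℓ⁻¹ * ‖y‖) ^ ℓ := by
            rw [Real.mul_rpow (by positivity) (norm_nonneg y),
              Real.rpow_inv_rpow (by positivity) hℓ.ne', ← mul_assoc, mul_div_cancel₀ b ha.ne']
        _ ≤ a * ‖x‖ ^ ℓ := by gcongr; exact hxy
    linarith [hC x, hC' y]

lemma exists_abs_exp_sub_exp_le_of_eq_zero (hβ : 0 ≤ β) (hf : PowerGrowth s 0 f) :
    ∃ D : ℝ≥0, ∀ x y, |Real.exp (-β * f x) - Real.exp (-β * f y)| ≤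
      D * ((1 + ‖x‖ + ‖y‖) ^ s * ‖x - y‖) := by
  obtain ⟨K, hK⟩ := hf.exists_abs_sub_le
  obtain ⟨m, hm⟩ := hf.bddBelow
  have hexp (x : E) : Real.exp (-β * f x) ≤ Real.exp (-β * m) :=
    Real.exp_le_exp.2 (mul_le_mul_of_nonpos_left (hm ⟨x, rfl⟩) (neg_nonpos.2 hβ))
  refine ⟨.mk (β * K * Real.exp (-β * m)) (by positivity), fun x y => ?_⟩
  calc |Real.exp (-β * f x) - Real.exp (-β * f y)|
      ≤ β * |f x - f y| * max (Real.exp (-β * f x)) (Real.exp (-β * f y)) :=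
        abs_exp_neg_mul_sub_le hβ _ _
    _ ≤ β * (K * ((1 + ‖x‖ + ‖y‖) ^ s * ‖x - y‖)) * Real.exp (-β * m) := by
        gcongr
        exacts [hK x y, max_le (hexp x) (hexp y)]
    _ = β * K * Real.exp (-β * m) * ((1 + ‖x‖ + ‖y‖) ^ s * ‖x - y‖) := by ring

lemma exists_abs_exp_sub_exp_le_of_pos (hβ : 0 < β) (hs : 0 ≤ s) (hℓ : 0 < ℓ)
    (hf : PowerGrowth s ℓ f) :
    ∃ D : ℝ≥0, ∀ x y, |Real.exp (-β * f x) - Real.exp (-β * f y)| ≤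
      D * ((1 + ‖x‖ + ‖y‖) ^ (-1 : ℝ) * ‖x - y‖) := by
  obtain ⟨K, hK⟩ := hf.exists_abs_sub_le
  obtain ⟨a, ha, C, hC⟩ := hf.exists_mul_sub_le
  obtain ⟨S, hS⟩ := exists_one_add_rpow_le_mul_exp (mul_pos hβ ha) hℓ (add_nonneg hs zero_le_one)
  lift s to ℝ≥0 using hs
  lift β to ℝ≥0 using hβ.le
  refine exists_abs_sub_le_rpow_neg_one_mul (K := β * K)
    (S := S * NNReal.mk (Real.exp (β * C)) (Real.exp_pos _).le) (s := s)
    (fun x => (Real.exp_pos _).le) (fun x => ?_) fun x y => ?_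
  · calc Real.exp (-β * f x) * (1 + ‖x‖) ^ (s + 1 : ℝ)
        ≤ Real.exp (-β * (a * ‖x‖ ^ ℓ - C)) * (S * Real.exp (β * a * ‖x‖ ^ ℓ)) := by
          gcongr ?_ * ?_
          · exact Real.exp_le_exp.2 (mul_le_mul_of_nonpos_left (hC x) (by simp))
          · exact hS _ (norm_nonneg x)
      _ = S * Real.exp (β * C) := by
          rw [mul_left_comm, ← Real.exp_add]; ring_nf
  · grw [abs_exp_neg_mul_sub_le β.coe_nonneg, hK x y]
    rw [NNReal.coe_mul, mul_assoc (β : ℝ) K]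

theorem temperedWeight_exp (hβ : 0 < β) (hs : 0 ≤ s) (hℓ : 0 ≤ ℓ) (hf : PowerGrowth s ℓ f)
    (hp : pM s ℓ ≤ p) : TemperedWeight p fun x => Real.exp (-β * f x) where
  exists_pos_le r := by
    obtain ⟨b, hb, C, hC⟩ := hf.exists_le_mul_add
    refine ⟨.mk (Real.exp (-β * (b * r ^ ℓ + C))) (Real.exp_pos _).le, Real.exp_pos _,
      fun x hx => ?_⟩
    refine Real.exp_le_exp.2 (mul_le_mul_of_nonpos_left ((hC x).trans ?_) (neg_nonpos.2 hβ.le))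
    gcongr
  exists_le_mul := by
    obtain ⟨K, Δ, hΔ⟩ := hf.exists_le_add hℓ
    refine ⟨K, .mk (Real.exp (β * Δ)) (Real.exp_pos _).le, fun x y hxy => ?_⟩
    rw [NNReal.coe_mk, ← Real.exp_add, Real.exp_le_exp]
    linarith [mul_le_mul_of_nonneg_left (hΔ x y hxy) hβ.le]
  exists_abs_sub_le := by
    have hmono {q : ℝ} (hq : q ≤ p - 2) (D : ℝ≥0) (x y : E) :
        D * ((1 + ‖x‖ + ‖y‖) ^ q * ‖x - y‖) ≤ D * ((1 + ‖x‖ + ‖y‖) ^ (p - 2) * ‖x - y‖) := by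
      gcongr
      linarith [norm_nonneg x, norm_nonneg y]
    rcases hℓ.eq_or_lt with rfl | hℓ
    · obtain ⟨D, hD⟩ := hf.exists_abs_exp_sub_exp_le_of_eq_zero hβ.le
      rw [pM, if_pos rfl] at hp
      exact ⟨D, fun x y => (hD x y).trans (hmono (by linarith) D x y)⟩
    · obtain ⟨D, hD⟩ := hf.exists_abs_exp_sub_exp_le_of_pos hβ hs hℓ
      rw [pM, if_neg hℓ.ne'] at hp
      exact ⟨D, fun x y => (hD x y).trans (hmono (by linarith) D x y)⟩

end PowerGrowth

end PowerGrowth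

theorem weighted_mean_stability_improved_general {E : Type*} [NormedAddCommGroup E]
    [NormedSpace ℝ E] [CompleteSpace E] [MeasurableSpace E] [BorelSpace E]
    [SecondCountableTopology E] {s ℓ β p : ℝ} {f : E → ℝ} (hβ : 0 < β) (hs : 0 ≤ s) (hℓ : 0 ≤ ℓ)
    (hf : PowerGrowth s ℓ f) (hp : pM s ℓ ≤ p) (R : ℝ≥0) :
    ∃ L : ℝ≥0, 0 < L ∧ ∀ μ ν : Measure E, IsProbabilityMeasure μ → IsProbabilityMeasure ν →
      eLpNorm' id p μ ≤ R →
      ‖weightedMean (fun x => Real.exp (-β * f x)) μ -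
        weightedMean (fun x => Real.exp (-β * f x)) ν‖ₑ ≤ L * wassersteinEDist p μ ν :=
  (hf.temperedWeight_exp hβ hs hℓ hp).exists_enorm_weightedMean_sub_le
    ((one_le_pM hs ℓ).trans hp) R

section Euclidean

variable {d : ℕ} {s ℓ p R : ℝ} {f : Rd d → ℝ} {μ : Measure (Rd d)}

lemma ClassA.powerGrowth (hf : ClassA s ℓ ℓ f) : PowerGrowth s ℓ f where
  exists_abs_sub_le := by
    obtain ⟨K, hK, hlip⟩ := hf.lip
    lift K to ℝ≥0 using hK.le
    exact ⟨K, fun x y => (hlip x y).trans_eq (mul_assoc _ _ _)⟩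
  exists_mul_sub_le := by
    obtain ⟨a, ha, C, _, hC⟩ := hf.growth_lower
    exact ⟨a, ha, C - fStar f, fun x => by linarith [hC x]⟩
  exists_le_mul_add := by
    obtain ⟨b, hb, C, _, hC⟩ := hf.growth_upper
    exact ⟨b, hb, C + fStar f, fun x => by linarith [hC x]⟩

lemma MomLE.eLpNorm'_id_le (hp : 0 < p) (hR : 0 ≤ R) (hμ : MomLE p R μ) :
    eLpNorm' id p μ ≤ R.toNNReal := by
  calc eLpNorm' id p μ ≤ ENNReal.ofReal (R ^ p) ^ (1 / p) := by
        exact ENNReal.rpow_le_rpow hμ (by positivity)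
    _ = R.toNNReal := by
        rw [← ENNReal.ofReal_rpow_of_nonneg hR hp.le, ← ENNReal.rpow_mul, mul_one_div_cancel hp.ne',
          ENNReal.rpow_one, ENNReal.ofReal]

lemma MomFin.eLpNorm'_id_ne_top (hp : 0 ≤ p) (hμ : MomFin p μ) : eLpNorm' id p μ ≠ ∞ :=
  ENNReal.rpow_ne_top_of_nonneg (by positivity) hμ.ne

end Euclidean

/-- **Improved Wasserstein stability estimate for the weighted mean.**
If `f ∈ A(s, ℓ, ℓ)`, then for every `R > 0` and `p ≥ p_M(s, ℓ)` there is `L̃ > 0`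
such that `|M_β(μ) - M_β(ν)| ≤ L̃ ⬝ W_p(μ, ν)` for all `μ ∈ P_{p,R}(ℝ^d)` and
`ν ∈ P_p(ℝ^d)`. -/
theorem weighted_mean_stability_improved
    (β : ℝ) (hβ : 0 < β) (d : ℕ) (hd : 1 ≤ d)
    (s ℓ : ℝ) (hs : 0 ≤ s) (hℓ : 0 ≤ ℓ)
    (f : Rd d → ℝ) (hf : ClassA s ℓ ℓ f)
    (R : ℝ) (hR : 0 < R) (p : ℝ) (hp : pM s ℓ ≤ p) :
    ∃ L > 0, ∀ μ ν : Measure (Rd d),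
      IsProbabilityMeasure μ → IsProbabilityMeasure ν →
      MomLE p R μ → MomFin p ν →
      ‖wMean β f μ - wMean β f ν‖ ≤ L * Wp p μ ν := by
  have hp1 : 1 ≤ p := (one_le_pM hs ℓ).trans hp
  obtain ⟨L, hL, hstable⟩ :=
    weighted_mean_stability_improved_general hβ hs hℓ hf.powerGrowth hp R.toNNReal
  refine ⟨L, hL, fun μ ν _ _ hμ hν => ?_⟩
  have hμR : eLpNorm' id p μ ≤ R.toNNReal := hμ.eLpNorm'_id_le (by linarith) hR.le
  have hdist : wassersteinEDist p μ ν ≠ ∞ :=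
    wassersteinEDist_ne_top hp1 (ne_top_of_le_ne_top coe_ne_top hμR)
      (hν.eLpNorm'_id_ne_top (by linarith))
  have hreal := ENNReal.toReal_mono (ENNReal.mul_ne_top coe_ne_top hdist)
    (hstable μ ν inferInstance inferInstance hμR)
  rwa [toReal_enorm, ENNReal.toReal_mul] at hreal

end
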